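/- Let G ∈ Ω. Then L_G ⊆ Z_G ⊆ M_G, i.e. every compact operator T with ess sup_{t>0} ‖T‖_{1+1/t}/G(e^t) < ∞ satisfies limsup_{t→∞} Tr(|T|^{1+1/t})/G(e^t) < ∞, and every compact operator with the latter property satisfies sup_{n≥0} (1/G(n+1)) ∑_{k=0}^n μ(k,T) < ∞. -/

import Mathlib

open MeasureTheory Filter Topology
open scoped ENNReal

noncomputable section

variable {H : Type*} [NormedAddCommGroup H] [InnerProductSpace ℂ H] [CompleteSpace H]

/-- `sv T n`: the `n`-th singular value of a (bounded) operator `T`, i.e. the distance in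
operator norm from `T` to the operators of rank at most `n`. -/
def sv (T : H →L[ℂ] H) (n : ℕ) : ℝ :=
  sInf {r : ℝ | ∃ F : H →L[ℂ] H,
    LinearMap.rank (F : H →ₗ[ℂ] H) ≤ (n : Cardinal) ∧ ‖T - F‖ = r}

/-- `lam` is *the* eigenvalue sequence of `T`: moduli are non-increasing and every nonzero
value `z` occurs exactly as many times as its algebraic multiplicity, i.e. the dimension of
the generalized eigenspace of `T` at `z` (this also forces padding by zeros when `T` has
only finitely many nonzero eigenvalues). -/
def IsEigenvalueSeq (T : H →L[ℂ] H) (lam : ℕ → ℂ) : Prop :=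
  Antitone (fun n => ‖lam n‖) ∧
  ∀ z : ℂ, z ≠ 0 →
    {n : ℕ | lam n = z}.Finite ∧
      Nat.card {n : ℕ | lam n = z} =
        Module.finrank ℂ (Module.End.maxGenEigenspace (↑T : H →ₗ[ℂ] H) z)

/-- The class `Ω`: increasing concave functions `G : [0,∞) → [0,∞)` diverging at `+∞`,
with `G(t) = O(t)` as `t → 0+` and `G(2t)/G(t) → 1`. -/
structure MemOmega (G : ℝ → ℝ) : Prop where
  nonneg : ∀ t : ℝ, 0 ≤ t → 0 ≤ G t
  mono : MonotoneOn G (Set.Ici 0)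
  concave : ConcaveOn ℝ (Set.Ici 0) G
  to_top : Tendsto G atTop atTop
  bigO_zero : (fun t => G t) =O[nhdsWithin 0 (Set.Ioi (0:ℝ))] fun t => t
  doubling : Tendsto (fun t => G (2 * t) / G t) atTop (nhds 1)

/-- `∑_n μ(n,T)^p` as an extended real (so that divergence is meaningful). -/
def zsum (T : H →L[ℂ] H) (p : ℝ) : ℝ≥0∞ := ∑' n : ℕ, ENNReal.ofReal (sv T n ^ p)

/-- Membership in `L_G`: `ess sup_{t>0} ‖T‖_{1+1/t} / G(e^t) < ∞`. -/
def MemLG (G : ℝ → ℝ) (T : H →L[ℂ] H) : Prop :=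
  ∃ C : ℝ, ∀ᵐ t ∂(volume.restrict (Set.Ioi (0:ℝ))),
    (zsum T (1 + 1 / t)) ^ (1 / (1 + 1 / t)) ≤ ENNReal.ofReal (C * G (Real.exp t))

/-- Membership in `Z_G`: `limsup_{t→∞} Tr(|T|^{1+1/t}) / G(e^t) < ∞`. -/
def MemZG (G : ℝ → ℝ) (T : H →L[ℂ] H) : Prop :=
  ∃ C : ℝ, ∀ᶠ t : ℝ in atTop, zsum T (1 + 1 / t) ≤ ENNReal.ofReal (C * G (Real.exp t))

/-- Membership in the Lorentz ideal `M_G`: `sup_n (1/G(n+1)) ∑_{k=0}^n μ(k,T) < ∞`. -/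
def MemMG (G : ℝ → ℝ) (T : H →L[ℂ] H) : Prop :=
  ∃ C : ℝ, ∀ n : ℕ, (∑ k ∈ Finset.range (n + 1), sv T k) ≤ C * G ((n : ℝ) + 1)

/-!
A function of class `Ω` is doubling: concavity and `0 ≤ G 0` give `G (2 * x) ≤ 2 * G x`.

Doubling gives `G (exp s) ^ (1 / s) = O(1)` as `s → ∞`, so raising the defining bound of `L_G` to
the power `1 + 1 / s` costs only a constant. The bound is available for almost every `s` only; to
reach a given `t`, take it at some `s ∈ (t, t + log 2)`: passing from the exponent `1 + 1 / s` to
the larger `1 + 1 / t` costs a bounded power of `‖T‖`, and passing from `G (exp s)` to `G (exp t)`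
costs the doubling constant.

For `Z_G ⊆ M_G`, take `t = log (n + 1)`. Since `(n + 1) ^ (1 / t) = e`, every singular value `μ`
with `μ ≥ 1 / (n + 1)` satisfies `μ ≤ e * μ ^ (1 + 1 / t)`, while the remaining ones among
`μ 0, …, μ n` sum to at most `1`.
-/

lemma rpow_le_max_one {x y : ℝ} (hx : 0 ≤ x) (hy₀ : 0 ≤ y) (hy₁ : y ≤ 1) : x ^ y ≤ max x 1 :=
  calc x ^ y ≤ max x 1 ^ y := by gcongr; exact le_max_left x 1
    _ ≤ max x 1 ^ (1 : ℝ) := Real.rpow_le_rpow_of_exponent_le (le_max_right x 1) hy₁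
    _ = max x 1 := Real.rpow_one _

lemma le_inv_add_exp_one_mul_rpow {a x : ℝ} (ha : 0 ≤ a) (hx : 1 < x) :
    a ≤ x⁻¹ + Real.exp 1 * a ^ (1 + 1 / Real.log x) := by
  have hx₀ : 0 < x := one_pos.trans hx
  have hlog : 0 < Real.log x := Real.log_pos hx
  rcases le_total a x⁻¹ with hax | hxa
  · exact hax.trans (le_add_of_nonneg_right (by positivity))
  · have one_le : 1 ≤ Real.exp 1 * a ^ (1 / Real.log x) :=
      calc 1 ≤ (x * a) ^ (1 / Real.log x) :=
            Real.one_le_rpow ((inv_le_iff_one_le_mul₀' hx₀).1 hxa) (by positivity)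
        _ = Real.exp 1 * a ^ (1 / Real.log x) := by
            rw [Real.mul_rpow hx₀.le ha, one_div, Real.rpow_inv_log hx₀ hx.ne']
    calc a ≤ a * (Real.exp 1 * a ^ (1 / Real.log x)) := le_mul_of_one_le_right ha one_le
      _ = Real.exp 1 * a ^ (1 + 1 / Real.log x) := by
          rw [Real.rpow_add_of_nonneg ha zero_le_one (by positivity), Real.rpow_one]; ring
      _ ≤ x⁻¹ + Real.exp 1 * a ^ (1 + 1 / Real.log x) :=
          le_add_of_nonneg_left (inv_nonneg.2 hx₀.le)

lemma sum_le_one_add_exp_one_mul_sum_rpow {ι : Type*} {s : Finset ι} {a : ι → ℝ}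
    (ha : ∀ i ∈ s, 0 ≤ a i) (hs : 1 < s.card) :
    ∑ i ∈ s, a i ≤ 1 + Real.exp 1 * ∑ i ∈ s, a i ^ (1 + 1 / Real.log s.card) := by
  have hs₀ : (s.card : ℝ) ≠ 0 := by positivity
  calc ∑ i ∈ s, a i
      ≤ ∑ i ∈ s, ((s.card : ℝ)⁻¹ + Real.exp 1 * a i ^ (1 + 1 / Real.log s.card)) :=
        Finset.sum_le_sum fun i hi => le_inv_add_exp_one_mul_rpow (ha i hi) (by exact_mod_cast hs)
    _ = 1 + Real.exp 1 * ∑ i ∈ s, a i ^ (1 + 1 / Real.log s.card) := by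
        rw [Finset.sum_add_distrib, Finset.sum_const, nsmul_eq_mul, mul_inv_cancel₀ hs₀,
          Finset.mul_sum]

lemma exists_mem_Ioo_of_ae_restrict_Ioi {P : ℝ → Prop} {a b c : ℝ}
    (h : ∀ᵐ t ∂volume.restrict (Set.Ioi c), P t) (hca : c ≤ a) (hab : a < b) :
    ∃ s ∈ Set.Ioo a b, P s := by
  have hsub : Set.Ioo a b ⊆ Set.Ioi c := fun s hs => hca.trans_lt hs.1
  have hP := ae_restrict_of_ae_restrict_of_subset hsub h
  have hvol : volume (Set.Ioo a b) ≠ 0 := by simpa using hab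
  exact Measure.exists_mem_of_measure_ne_zero_of_ae hvol hP

/-- Positive nondecreasing functions on `[1, ∞)` satisfying the doubling condition with constant
`K`. Nothing is asked on `[0, 1)` because the ideals `L_G`, `Z_G` and `M_G` only sample `G` at the
points `exp t` with `t > 0` and `n + 1`. -/
structure IsDoublingWeight (G : ℝ → ℝ) (K : ℝ) : Prop where
  map_one_pos : 0 < G 1
  mono : MonotoneOn G (Set.Ici 1)
  map_two_mul_le : ∀ x, 1 ≤ x → G (2 * x) ≤ K * G x

namespace IsDoublingWeight

variable {G : ℝ → ℝ} {K C s t : ℝ}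

lemma pos (hG : IsDoublingWeight G K) {x : ℝ} (hx : 1 ≤ x) : 0 < G x :=
  hG.map_one_pos.trans_le (hG.mono Set.self_mem_Ici hx hx)

lemma one_le_const (hG : IsDoublingWeight G K) : 1 ≤ K := by
  have h₁₂ : G 1 ≤ G (2 * 1) := hG.mono (by simp) (by simp) (by norm_num)
  exact (le_mul_iff_one_le_left hG.map_one_pos).1 (h₁₂.trans (hG.map_two_mul_le 1 le_rfl))

lemma map_two_pow_le (hG : IsDoublingWeight G K) (n : ℕ) : G (2 ^ n) ≤ K ^ n * G 1 := by
  have hK : 0 ≤ K := zero_le_one.trans hG.one_le_const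
  induction n with
  | zero => simp
  | succ n ih =>
    calc G (2 ^ (n + 1)) = G (2 * 2 ^ n) := by rw [pow_succ']
      _ ≤ K * G (2 ^ n) := hG.map_two_mul_le _ (one_le_pow₀ one_le_two)
      _ ≤ K * (K ^ n * G 1) := by gcongr
      _ = K ^ (n + 1) * G 1 := by ring

lemma map_exp_le_mul_map_exp (hG : IsDoublingWeight G K) (ht : 0 ≤ t) (hts : t ≤ s)
    (hst : s ≤ t + Real.log 2) : G (Real.exp s) ≤ K * G (Real.exp t) := by
  have hexp : Real.exp s ≤ 2 * Real.exp t := by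
    rwa [← Real.exp_log two_pos, ← Real.exp_add, Real.exp_le_exp, add_comm]
  have hs₁ : 1 ≤ Real.exp s := Real.one_le_exp (ht.trans hts)
  exact (hG.mono hs₁ (hs₁.trans hexp) hexp).trans (hG.map_two_mul_le _ (Real.one_le_exp ht))

lemma map_exp_le_rpow (hG : IsDoublingWeight G K) (hs : 1 ≤ s) :
    G (Real.exp s) ≤ K ^ (3 * s) * G 1 := by
  have hK : 1 ≤ K := hG.one_le_const
  -- `⌈2 s⌉` doublings of `1` reach `exp s` because `log 2 > 1 / 2`.
  have hexp : Real.exp s ≤ 2 ^ ⌈2 * s⌉₊ := by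
    rw [← Real.le_log_iff_exp_le (by positivity), Real.log_pow]
    nlinarith [Nat.le_ceil (2 * s), Real.log_two_gt_d9]
  have hceil : (⌈2 * s⌉₊ : ℝ) ≤ 3 * s := by
    linarith [Nat.ceil_lt_add_one (show 0 ≤ 2 * s by linarith)]
  have hs₁ : 1 ≤ Real.exp s := Real.one_le_exp (by linarith)
  have hG₁ := hG.map_one_pos
  calc G (Real.exp s) ≤ G (2 ^ ⌈2 * s⌉₊) := hG.mono hs₁ (hs₁.trans hexp) hexp
    _ ≤ K ^ ⌈2 * s⌉₊ * G 1 := hG.map_two_pow_le _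
    _ = K ^ (⌈2 * s⌉₊ : ℝ) * G 1 := by rw [Real.rpow_natCast]
    _ ≤ K ^ (3 * s) * G 1 := by gcongr

lemma mul_map_exp_rpow_one_div_le (hG : IsDoublingWeight G K) (hC : 0 ≤ C) (hs : 1 ≤ s) :
    (C * G (Real.exp s)) ^ (1 / s) ≤ max (C * G 1) 1 * K ^ 3 := by
  have hs₀ : 0 < s := one_pos.trans_le hs
  have hK : 0 ≤ K := zero_le_one.trans hG.one_le_const
  have hG₁ : 0 < G 1 := hG.map_one_pos
  have hGs : 0 < G (Real.exp s) := hG.pos (Real.one_le_exp hs₀.le)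
  calc (C * G (Real.exp s)) ^ (1 / s) ≤ (C * (K ^ (3 * s) * G 1)) ^ (1 / s) := by
        gcongr
        exact hG.map_exp_le_rpow hs
    _ = (C * G 1) ^ (1 / s) * (K ^ (3 * s)) ^ (1 / s) := by
        rw [← Real.mul_rpow (by positivity) (by positivity)]; ring_nf
    _ = (C * G 1) ^ (1 / s) * K ^ 3 := by
        rw [← Real.rpow_mul hK, mul_assoc, mul_one_div_cancel hs₀.ne', mul_one]; norm_cast
    _ ≤ max (C * G 1) 1 * K ^ 3 := by
        gcongr
        exact rpow_le_max_one (by positivity) (by positivity) ((div_le_one hs₀).2 hs)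

end IsDoublingWeight

lemma map_mul_le_of_concaveOn {G : ℝ → ℝ} (hconc : ConcaveOn ℝ (Set.Ici 0) G) (hG₀ : 0 ≤ G 0)
    {l x : ℝ} (hl : 1 ≤ l) (hx : 0 ≤ x) : G (l * x) ≤ l * G x := by
  have hl₀ : 0 < l := one_pos.trans_le hl
  have hinv : l⁻¹ ≤ 1 := inv_le_one_of_one_le₀ hl
  have hchord : (1 - l⁻¹) * G 0 + l⁻¹ * G (l * x) ≤ G x := by
    simpa [hl₀.ne'] using hconc.2 Set.self_mem_Ici (Set.mem_Ici.2 (by positivity : 0 ≤ l * x))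
      (sub_nonneg.2 hinv) (inv_nonneg.2 hl₀.le) (sub_add_cancel 1 l⁻¹)
  rw [← inv_mul_le_iff₀ hl₀]
  exact (le_add_of_nonneg_left (mul_nonneg (sub_nonneg.2 hinv) hG₀)).trans hchord

lemma MemOmega.map_mul_le {G : ℝ → ℝ} (hG : MemOmega G) {l x : ℝ} (hl : 1 ≤ l) (hx : 0 ≤ x) :
    G (l * x) ≤ l * G x :=
  map_mul_le_of_concaveOn hG.concave (hG.nonneg 0 le_rfl) hl hx

lemma MemOmega.map_one_pos {G : ℝ → ℝ} (hG : MemOmega G) : 0 < G 1 := by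
  obtain ⟨x, hx, hGx⟩ := ((eventually_ge_atTop 1).and (hG.to_top.eventually_gt_atTop 0)).exists
  have hmul : G x ≤ x * G 1 := by simpa using hG.map_mul_le hx zero_le_one
  exact pos_of_mul_pos_right (hGx.trans_le hmul) (zero_le_one.trans hx)

lemma MemOmega.isDoublingWeight {G : ℝ → ℝ} (hG : MemOmega G) : IsDoublingWeight G 2 where
  map_one_pos := hG.map_one_pos
  mono := hG.mono.mono (Set.Ici_subset_Ici.2 zero_le_one)
  map_two_mul_le _ hx := hG.map_mul_le one_le_two (zero_le_one.trans hx)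

section Operator

variable {E : Type*} [NormedAddCommGroup E] [InnerProductSpace ℂ E]

lemma sv_nonneg (T : E →L[ℂ] E) (n : ℕ) : 0 ≤ sv T n := by
  refine Real.sInf_nonneg ?_
  rintro _ ⟨F, -, rfl⟩
  exact norm_nonneg _

lemma sv_le_norm (T : E →L[ℂ] E) (n : ℕ) : sv T n ≤ ‖T‖ := by
  refine csInf_le ⟨0, ?_⟩ ⟨0, by simp, by simp⟩
  rintro _ ⟨F, -, rfl⟩
  exact norm_nonneg _

lemma zsum_le_ofReal_norm_rpow_mul_zsum (T : E →L[ℂ] E) {p q : ℝ} (hq : 0 ≤ q) (hqp : q ≤ p) :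
    zsum T p ≤ ENNReal.ofReal (‖T‖ ^ (p - q)) * zsum T q := by
  have hpq : 0 ≤ p - q := sub_nonneg.2 hqp
  simp only [zsum, ← ENNReal.tsum_mul_left,
    ← ENNReal.ofReal_mul (Real.rpow_nonneg (norm_nonneg T) _)]
  gcongr with n
  have hμ := sv_nonneg T n
  calc sv T n ^ p = sv T n ^ (p - q) * sv T n ^ q := by
        rw [← Real.rpow_add_of_nonneg hμ hpq hq, sub_add_cancel]
    _ ≤ ‖T‖ ^ (p - q) * sv T n ^ q := by gcongr; exact sv_le_norm T n

lemma sum_sv_rpow_le_of_zsum_le {T : E →L[ℂ] E} {p b : ℝ} (hb : 0 ≤ b)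
    (h : zsum T p ≤ ENNReal.ofReal b) (s : Finset ℕ) : ∑ k ∈ s, sv T k ^ p ≤ b := by
  rw [← ENNReal.ofReal_le_ofReal_iff hb,
    ENNReal.ofReal_sum_of_nonneg fun k _ => Real.rpow_nonneg (sv_nonneg T k) p]
  exact (ENNReal.sum_le_tsum s).trans h

lemma zsum_le_of_zsum_rpow_le {T : E →L[ℂ] E} {b s t : ℝ} (hb : 0 ≤ b) (ht : 1 ≤ t) (hts : t ≤ s)
    (h : zsum T (1 + 1 / s) ^ (1 / (1 + 1 / s)) ≤ ENNReal.ofReal b) :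
    zsum T (1 + 1 / t) ≤ ENNReal.ofReal (max ‖T‖ 1 * (b * b ^ (1 / s))) := by
  have ht₀ : 0 < t := one_pos.trans_le ht
  have hs₀ : 0 < s := ht₀.trans_le hts
  have hst : 1 / s ≤ 1 / t := one_div_le_one_div_of_le ht₀ hts
  have hs_nonneg : 0 ≤ 1 / s := by positivity
  have ht_le : 1 / t ≤ 1 := (div_le_one ht₀).2 ht
  have hzsum : zsum T (1 + 1 / s) ≤ ENNReal.ofReal (b * b ^ (1 / s)) := by
    rwa [one_div (1 + 1 / s), ENNReal.rpow_inv_le_iff (by positivity),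
      ENNReal.ofReal_rpow_of_nonneg hb (by positivity),
      Real.rpow_add_of_nonneg hb zero_le_one hs_nonneg, Real.rpow_one] at h
  calc zsum T (1 + 1 / t)
      ≤ ENNReal.ofReal (‖T‖ ^ (1 + 1 / t - (1 + 1 / s))) * zsum T (1 + 1 / s) :=
        zsum_le_ofReal_norm_rpow_mul_zsum T (by positivity) (by gcongr)
    _ ≤ ENNReal.ofReal (max ‖T‖ 1) * ENNReal.ofReal (b * b ^ (1 / s)) := by
        gcongr
        exact rpow_le_max_one (norm_nonneg T) (by linarith) (by linarith)
    _ = ENNReal.ofReal (max ‖T‖ 1 * (b * b ^ (1 / s))) := by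
        rw [← ENNReal.ofReal_mul (by positivity)]

theorem MemLG.memZG {G : ℝ → ℝ} {K : ℝ} {T : E →L[ℂ] E} (hG : IsDoublingWeight G K)
    (hT : MemLG G T) : MemZG G T := by
  obtain ⟨C, hC⟩ := hT
  refine ⟨max ‖T‖ 1 * (|C| * K * (max (|C| * G 1) 1 * K ^ 3)), ?_⟩
  filter_upwards [eventually_ge_atTop 1] with t ht
  have ht₀ : 0 ≤ t := zero_le_one.trans ht
  obtain ⟨s, ⟨hts, hst⟩, hs⟩ :=
    exists_mem_Ioo_of_ae_restrict_Ioi hC ht₀ (lt_add_of_pos_right t (Real.log_pos one_lt_two))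
  have hGs : 0 < G (Real.exp s) := hG.pos (Real.one_le_exp (ht₀.trans hts.le))
  have hscale : G (Real.exp s) ≤ K * G (Real.exp t) :=
    hG.map_exp_le_mul_map_exp ht₀ hts.le hst.le
  have hroot := hG.mul_map_exp_rpow_one_div_le (abs_nonneg C) (ht.trans hts.le)
  have hs_abs := hs.trans (ENNReal.ofReal_le_ofReal
    (mul_le_mul_of_nonneg_right (le_abs_self C) hGs.le))
  refine (zsum_le_of_zsum_rpow_le (by positivity) ht hts.le hs_abs).trans
    (ENNReal.ofReal_le_ofReal ?_)
  calc max ‖T‖ 1 * (|C| * G (Real.exp s) * (|C| * G (Real.exp s)) ^ (1 / s))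
      ≤ max ‖T‖ 1 * (|C| * (K * G (Real.exp t)) * (max (|C| * G 1) 1 * K ^ 3)) := by
        gcongr
        exact mul_nonneg (abs_nonneg C) (hGs.le.trans hscale)
    _ = max ‖T‖ 1 * (|C| * K * (max (|C| * G 1) 1 * K ^ 3)) * G (Real.exp t) := by ring

lemma memMG_of_eventually {G : ℝ → ℝ} {C : ℝ} {T : E →L[ℂ] E} (hG : ∀ n : ℕ, 0 < G (n + 1))
    (h : ∀ᶠ n : ℕ in atTop, ∑ k ∈ Finset.range (n + 1), sv T k ≤ C * G (n + 1)) :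
    MemMG G T := by
  obtain ⟨B, hB⟩ := (isBoundedUnder_of_eventually_le
    (h.mono fun n hn => (div_le_iff₀ (hG n)).2 hn)).bddAbove_range
  exact ⟨B, fun n => (div_le_iff₀ (hG n)).1 (hB ⟨n, rfl⟩)⟩

lemma sum_range_sv_le_of_zsum_le {T : E →L[ℂ] E} {b : ℝ} {n : ℕ} (hb : 0 ≤ b) (hn : 1 ≤ n)
    (h : zsum T (1 + 1 / Real.log (n + 1)) ≤ ENNReal.ofReal b) :
    ∑ k ∈ Finset.range (n + 1), sv T k ≤ 1 + Real.exp 1 * b := by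
  have hsum := sum_le_one_add_exp_one_mul_sum_rpow (s := Finset.range (n + 1))
    (fun k _ => sv_nonneg T k) (by rw [Finset.card_range]; omega)
  rw [Finset.card_range, Nat.cast_add_one] at hsum
  refine hsum.trans ?_
  gcongr
  exact sum_sv_rpow_le_of_zsum_le hb h _

theorem MemZG.memMG {G : ℝ → ℝ} {T : E →L[ℂ] E} (hpos : 0 < G 1)
    (hmono : MonotoneOn G (Set.Ici 1)) (hT : MemZG G T) : MemMG G T := by
  obtain ⟨C, hC⟩ := hT
  have hG_ge (n : ℕ) : G 1 ≤ G (n + 1) := hmono (by simp) (by simp) (by simp)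
  have hG_pos (n : ℕ) : 0 < G (n + 1) := hpos.trans_le (hG_ge n)
  have hlog : Tendsto (fun n : ℕ => Real.log (n + 1)) atTop atTop :=
    Real.tendsto_log_atTop.comp (tendsto_atTop_add_const_right _ _ tendsto_natCast_atTop_atTop)
  refine memMG_of_eventually (C := 1 / G 1 + Real.exp 1 * |C|) hG_pos ?_
  filter_upwards [hlog.eventually hC, eventually_ge_atTop 1] with n hz hn
  rw [Real.exp_log (by positivity)] at hz
  have hGn := hG_pos n
  have hz_abs := hz.trans (ENNReal.ofReal_le_ofReal
    (mul_le_mul_of_nonneg_right (le_abs_self C) hGn.le))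
  calc ∑ k ∈ Finset.range (n + 1), sv T k
      ≤ 1 + Real.exp 1 * (|C| * G (n + 1)) := sum_range_sv_le_of_zsum_le (by positivity) hn hz_abs
    _ ≤ G (n + 1) / G 1 + Real.exp 1 * (|C| * G (n + 1)) := by
        gcongr
        exact (one_le_div hpos).2 (hG_ge n)
    _ = (1 / G 1 + Real.exp 1 * |C|) * G (n + 1) := by ring

theorem statement5_general {G : ℝ → ℝ} {K : ℝ} (hG : IsDoublingWeight G K) (T : E →L[ℂ] E) :
    (MemLG G T → MemZG G T) ∧ (MemZG G T → MemMG G T) :=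
  ⟨MemLG.memZG hG, MemZG.memMG hG.map_one_pos hG.mono⟩

end Operator

/-- for `G ∈ Ω` one has the inclusions `L_G ⊆ Z_G ⊆ M_G`. -/
theorem statement5
    {H : Type*} [NormedAddCommGroup H] [InnerProductSpace ℂ H] [CompleteSpace H]
    (e : HilbertBasis ℕ ℂ H)
    (G : ℝ → ℝ) (hG : MemOmega G) :
    (∀ T : H →L[ℂ] H, IsCompactOperator ⇑T → MemLG G T → MemZG G T) ∧
    (∀ T : H →L[ℂ] H, IsCompactOperator ⇑T → MemZG G T → MemMG G T) := by
  exact ⟨fun T _ => (statement5_general hG.isDoublingWeight T).1,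
    fun T _ => (statement5_general hG.isDoublingWeight T).2⟩
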